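/- Let 𝔾 be a locally compact quantum group and E a conditional expectation of B(L²(𝔾)) onto L∞(𝔾̂) mapping L∞(𝔾) into the center of L∞(𝔾̂). Then for any state ρ ∈ L∞(𝔾̂)*, the functional m := ρ ∘ E|_{L∞(𝔾)} is a left-invariant mean on L∞(𝔾); in particular 𝔾 is amenable. -/

import Mathlib

/-!
Common framework: an axiomatization of locally compact quantum groups (in the von Neumann
algebraic setting of Kustermans–Vaes) acting on a Hilbert space `H = L²(𝔾)`.

Since completed Hilbert space tensor products are not available, the tensor square
`H2 = L²(𝔾) ⊗ L²(𝔾)` is axiomatized: a Hilbert space together with a bilinear map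
`tmul` with total range satisfying `⟪a ⊗ b, c ⊗ d⟫ = ⟪a, c⟫⟪b, d⟫`, the induced tensor
product of operators `tensorOp`, tensor products `funcTensor` of normal functionals,
and the slice maps `sliceL = ω ⊗ id`, `sliceR = id ⊗ ω`.

Normal functionals (elements of the predual `B(H)_*`) are characterized concretely:
`ω(x) = ∑ ⟪ηₙ, x ξₙ⟫` with `∑‖ξₙ‖² , ∑‖ηₙ‖² < ∞`.

Membership of an operator `X` on `H2` in a spatial tensor product `P ⊗̄ Q` of von Neumann
algebras is encoded, via the commutation theorem, as: `X` commutes with all `a' ⊗ b'`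
with `a' ∈ P'`, `b' ∈ Q'`.

A locally compact quantum group is recorded through its left regular co-representation
`W ∈ L∞(𝔾) ⊗̄ L∞(𝔾̂)` and right regular co-representation `V ∈ L∞(𝔾̂)' ⊗̄ L∞(𝔾)`,
which implement the co-multiplication: `Δ(x) = W*(1 ⊗ x)W = V(x ⊗ 1)V*` for `x ∈ L∞(𝔾)`;
`Δ̄(x) := W*(1 ⊗ x)W` for arbitrary `x ∈ B(H)` is the canonical normal extension of `Δ`.
-/

noncomputable section

open scoped ComplexOrder ComplexInnerProductSpace

namespace LCQGNote

/-- The bounded operators `B(H)`. -/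
abbrev B (H : Type*) [NormedAddCommGroup H] [InnerProductSpace ℂ H] : Type _ := H →L[ℂ] H

variable (H H2 : Type*)
  [NormedAddCommGroup H] [InnerProductSpace ℂ H] [CompleteSpace H]
  [NormedAddCommGroup H2] [InnerProductSpace ℂ H2] [CompleteSpace H2]

/-- The vector functional `ω_{ξ,η} : x ↦ ⟨x ξ, η⟩` on `B(H)` (written here in the
Mathlib convention for inner products, which are conjugate-linear in the first slot). -/
def vecFunctional (ξ η : H) : B H →ₗ[ℂ] ℂ where
  toFun x := ⟪η, x ξ⟫
  map_add' x y := by simp [inner_add_right]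
  map_smul' c x := by simp [inner_smul_right]

/-- A functional on `B(H)` is normal (σ-weakly continuous, i.e. belongs to the predual
`B(H)_*`) iff it has the form `x ↦ ∑ ⟪ηₙ, x ξₙ⟫` with `(ξₙ), (ηₙ)` square-summable. -/
def IsNormalFunctional (ω : B H →ₗ[ℂ] ℂ) : Prop :=
  ∃ ξ η : ℕ → H, Summable (fun n => ‖ξ n‖ ^ 2) ∧ Summable (fun n => ‖η n‖ ^ 2) ∧
    ∀ x : B H, HasSum (fun n => ⟪η n, x (ξ n)⟫) (ω x)

/-- `φ` is a state of the von Neumann algebra `N ⊆ B(H)`: it is unital and positive on `N`.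
(Functionals on `N` are encoded as functionals on `B(H)`; only the restriction to `N`
matters, by the Hahn–Banach extension theorem.) -/
def IsStateOn (N : VonNeumannAlgebra H) (φ : B H →ₗ[ℂ] ℂ) : Prop :=
  φ 1 = 1 ∧ ∀ x : B H, x ∈ N → x.IsPositive → 0 ≤ φ x

/-- A conditional expectation of `B(H)` onto a von Neumann subalgebra `N`:
a unital positive projection `E : B(H) → B(H)` with range `N`. -/
structure IsConditionalExpectation (N : VonNeumannAlgebra H) (E : B H →ₗ[ℂ] B H) : Prop where
  unital : E 1 = 1
  positive : ∀ x : B H, x.IsPositive → (E x).IsPositive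
  mem_range : ∀ x : B H, E x ∈ N
  fixes : ∀ x ∈ N, E x = x

/-- The center of a von Neumann algebra `N`: elements of `N` commuting with all of `N`. -/
def center (N : VonNeumannAlgebra H) : Set (B H) := {z | z ∈ N ∧ ∀ y ∈ N, z * y = y * z}

/-- A von Neumann algebra `N ⊆ B(H)` is injective if there is a conditional expectation
of `B(H)` onto `N`. -/
def IsInjectiveVNA (N : VonNeumannAlgebra H) : Prop :=
  ∃ E : B H →ₗ[ℂ] B H, IsConditionalExpectation H N E

/-- A locally compact quantum group `𝔾`, axiomatized over its Hilbert space `H = L²(𝔾)`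
together with the tensor square `H2 = L²(𝔾) ⊗ L²(𝔾)`.  `M = L∞(𝔾)`, `Mhat = L∞(𝔾̂)`
(both acting canonically on `L²(𝔾)`). -/
structure LCQG where
  /-- `L∞(𝔾)` -/
  M : VonNeumannAlgebra H
  /-- `L∞(𝔾̂)`, the dual von Neumann algebra, also acting on `L²(𝔾)` -/
  Mhat : VonNeumannAlgebra H
  /-- the tensor map `H × H → H2 = H ⊗ H` -/
  tmul : H →ₗ[ℂ] H →ₗ[ℂ] H2
  tmul_inner : ∀ a b c d : H, ⟪tmul a b, tmul c d⟫ = ⟪a, c⟫ * ⟪b, d⟫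
  tmul_total : (Submodule.span ℂ {v : H2 | ∃ a b, v = tmul a b}).topologicalClosure = ⊤
  /-- the tensor product of operators: `tensorOp x y = x ⊗ y` on `H2` -/
  tensorOp : B H →ₗ[ℂ] B H →ₗ[ℂ] B H2
  tensorOp_apply : ∀ (x y : B H) (a b : H), tensorOp x y (tmul a b) = tmul (x a) (y b)
  /-- the flip (tensor swap) unitary `Σ` on `H2` -/
  flipU : B H2
  flipU_apply : ∀ a b : H, flipU (tmul a b) = tmul b a
  /-- the tensor product `ω ⊗ ρ` of (normal) functionals -/
  funcTensor : (B H →ₗ[ℂ] ℂ) → (B H →ₗ[ℂ] ℂ) → (B H2 →ₗ[ℂ] ℂ)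
  funcTensor_elem : ∀ ω ρ (x y : B H), funcTensor ω ρ (tensorOp x y) = ω x * ρ y
  funcTensor_normal : ∀ ω ρ, IsNormalFunctional H ω → IsNormalFunctional H ρ →
    IsNormalFunctional H2 (funcTensor ω ρ)
  /-- the left slice map `sliceL ω = ω ⊗ id : B(H2) → B(H)` -/
  sliceL : (B H →ₗ[ℂ] ℂ) → B H2 →ₗ[ℂ] B H
  /-- the right slice map `sliceR ω = id ⊗ ω : B(H2) → B(H)` -/
  sliceR : (B H →ₗ[ℂ] ℂ) → B H2 →ₗ[ℂ] B H
  sliceL_char : ∀ ω X (ξ η : H),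
    vecFunctional H ξ η (sliceL ω X) = funcTensor ω (vecFunctional H ξ η) X
  sliceR_char : ∀ ω X (ξ η : H),
    vecFunctional H ξ η (sliceR ω X) = funcTensor (vecFunctional H ξ η) ω X
  /-- the left regular co-representation `W` -/
  W : B H2
  W_unitary_l : star W * W = 1
  W_unitary_r : W * star W = 1
  /-- `W ∈ L∞(𝔾) ⊗̄ L∞(𝔾̂)` (via the commutation theorem for tensor products) -/
  W_mem : ∀ a' ∈ M.commutant, ∀ b' ∈ Mhat.commutant, Commute W (tensorOp a' b')
  /-- the right regular co-representation `V` -/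
  V : B H2
  V_unitary_l : star V * V = 1
  V_unitary_r : V * star V = 1
  /-- `V ∈ L∞(𝔾̂)' ⊗̄ L∞(𝔾)` (via the commutation theorem for tensor products) -/
  V_mem : ∀ a ∈ Mhat, ∀ b' ∈ M.commutant, Commute V (tensorOp a b')
  /-- `Δ` maps `L∞(𝔾)` into `L∞(𝔾) ⊗̄ L∞(𝔾)` -/
  Delta_mem : ∀ x ∈ M, ∀ a' ∈ M.commutant, ∀ b' ∈ M.commutant,
    Commute (star W * tensorOp 1 x * W) (tensorOp a' b')
  /-- `V` also implements the co-multiplication: `Δ(x) = V(x ⊗ 1)V*` on `L∞(𝔾)` -/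
  Delta_V : ∀ x ∈ M, star W * tensorOp 1 x * W = V * tensorOp x 1 * star V
  /-- slices of `Δ(x)`, `x ∈ L∞(𝔾)`, lie in `L∞(𝔾)` -/
  slice_Delta_mem : ∀ ω, ∀ x ∈ M, sliceL ω (star W * tensorOp 1 x * W) ∈ M
  /-- slices `(ω ⊗ id)(V (x ⊗ 1) V*)` lie in `L∞(𝔾)`, since `V ∈ L∞(𝔾̂)' ⊗̄ L∞(𝔾)` -/
  sliceL_rConj_mem : ∀ ω (x : B H), sliceL ω (V * tensorOp x 1 * star V) ∈ M
  /-- the fixed-point characterization `L∞(𝔾̂) = {y : V(y ⊗ 1)V* = y ⊗ 1}`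
  (cf. Kustermans–Vaes, proof of Proposition 4.2) -/
  fixedPoint_mem : ∀ y : B H, V * tensorOp y 1 * star V = tensorOp y 1 → y ∈ Mhat

namespace LCQG

variable {H H2} (Q : LCQG H H2)

/-- The (extended) co-multiplication `Δ̄ : B(L²(𝔾)) → L∞(𝔾) ⊗̄ B(L²(𝔾))`,
`Δ̄(x) = W*(1 ⊗ x)W`; its restriction to `L∞(𝔾)` is the co-multiplication `Δ`. -/
def Delta (x : B H) : B H2 := star Q.W * Q.tensorOp 1 x * Q.W

/-- The map `x ↦ V (x ⊗ 1) V*` on `B(L²(𝔾))`. -/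
def rConj : B H →ₗ[ℂ] B H2 where
  toFun x := Q.V * Q.tensorOp x 1 * star Q.V
  map_add' x y := by simp [mul_add, add_mul]
  map_smul' c x := by simp [mul_smul_comm, smul_mul_assoc]

/-- The left regular co-representation of the dual: `Ŵ = Σ W* Σ` (i.e. `σ(W)*`). -/
def What : B H2 := Q.flipU * star Q.W * Q.flipU

/-- The (extended) co-multiplication of the dual quantum group, `Δ̂(y) = Ŵ*(1 ⊗ y)Ŵ`. -/
def Deltahat (y : B H) : B H2 := star Q.What * Q.tensorOp 1 y * Q.What

/-- `m` is a left-invariant mean on `L∞(𝔾)`: a state with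
`m((ω ⊗ id)Δ(x)) = ω(1) m(x)` for all `x ∈ L∞(𝔾)` and normal `ω ∈ L¹(𝔾)`. -/
def IsLeftInvariantMean (m : B H →ₗ[ℂ] ℂ) : Prop :=
  IsStateOn H Q.M m ∧
    ∀ x ∈ Q.M, ∀ ω : B H →ₗ[ℂ] ℂ, IsNormalFunctional H ω →
      m (Q.sliceL ω (Q.Delta x)) = ω 1 * m x

/-- `𝔾` is amenable if it admits a left-invariant mean. -/
def Amenable : Prop := ∃ m : B H →ₗ[ℂ] ℂ, Q.IsLeftInvariantMean m

/-- `𝔾` is quantum injective if there is a conditional expectation of `B(L²(𝔾))` onto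
`L∞(𝔾)` mapping `L∞(𝔾̂)` into the center of `L∞(𝔾)`. -/
def QuantumInjective : Prop :=
  ∃ E : B H →ₗ[ℂ] B H, IsConditionalExpectation H Q.M E ∧
    ∀ x ∈ Q.Mhat, E x ∈ center H Q.M

end LCQG

/-!
The slice `x ↦ (ω_{ξ,ξ} ⊗ id)(Δ̄ x)` has Kraus operators `aᵢ = (ω_{ξ,eᵢ} ⊗ id)(W) ∈ L∞(𝔾̂)`, where
`(eᵢ)` is an orthonormal basis of `L²(𝔾)`. By Tomiyama's theorem `E` is an `L∞(𝔾̂)`-bimodule map, so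
`E` commutes with each finite sum `x ↦ ∑ aᵢ* x aᵢ`. As `E` need not be normal, on positive operators
this only gives `Φ (E x) ≤ E (Φ x)` for the slice `Φ` itself; but the positive map `E ∘ Φ - Φ ∘ E`
annihilates `1`, hence vanishes. By polarization and norm-convergent sums, `E` commutes with
`x ↦ (ω ⊗ id)(Δ̄ x)` for all normal `ω`. For `x ∈ L∞(𝔾)`, `E x` commutes with `L∞(𝔾̂)`, so
`Δ̄ (E x) = 1 ⊗ E x` and `E ((ω ⊗ id)(Δ x)) = ω(1) E x`.

Tomiyama's theorem is derived from Kadison's inequality `φ(h)² ≤ φ(h²)`, which makes `E` a Jordan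
bimodule map. The failure `b ↦ E (b y)` of the bimodule property at some `y` with `E y = 0` is then
a symmetrized derivation `d` of `L∞(𝔾̂)`. Such a `d` satisfies `d (uⁿ) = n uⁿ⁻¹ d u`, which is
bounded in `n` for `u` unitary, so `d = 0`.
-/

section PositiveMaps

theorem sum_smul_mul_self_le {R ι : Type*} [Ring R] [PartialOrder R] [StarRing R]
    [StarOrderedRing R] [Algebra ℝ R] [StarModule ℝ R] (s : Finset ι) {e : ι → R}
    (he : ∀ i, 0 ≤ e i) (hsum : ∑ i ∈ s, e i = 1) (c : ι → ℝ) :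
    (∑ i ∈ s, c i • e i) * (∑ i ∈ s, c i • e i) ≤ ∑ i ∈ s, c i ^ 2 • e i := by
  set m := ∑ i ∈ s, c i • e i with hm
  have hmsa : star m = m := by
    simp [m, star_sum, star_smul, (IsSelfAdjoint.of_nonneg (he _)).star_eq]
  have hvar : 0 ≤ ∑ i ∈ s, star (algebraMap ℝ R (c i) - m) * e i * (algebraMap ℝ R (c i) - m) :=
    Finset.sum_nonneg fun i _ => star_left_conjugate_nonneg (he i) _
  have hterm : ∀ i, star (algebraMap ℝ R (c i) - m) * e i * (algebraMap ℝ R (c i) - m) =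
      c i ^ 2 • e i - (c i • e i) * m - m * (c i • e i) + m * e i * m := fun i => by
    simp only [Algebra.algebraMap_eq_smul_one, star_sub, star_smul, star_one, hmsa, star_trivial,
      sub_mul, mul_sub, smul_mul_assoc, mul_smul_comm, one_mul, mul_one]
    module
  simp only [hterm, Finset.sum_add_distrib, Finset.sum_sub_distrib, ← Finset.sum_mul,
    ← Finset.mul_sum, hsum, ← hm, mul_one, sub_add_cancel] at hvar
  exact sub_nonneg.1 hvar

variable {A₁ A₂ : Type*} [CStarAlgebra A₁] [PartialOrder A₁] [StarOrderedRing A₁]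
  [CStarAlgebra A₂] [PartialOrder A₂] [StarOrderedRing A₂]

theorem map_eq_zero_of_map_one_eq_zero {f : A₁ →ₚ[ℂ] A₂} (hf : f 1 = 0) (x : A₁) : f x = 0 := by
  have hext : f.toLinearMap = 0 := LinearMap.ext_on CStarAlgebra.span_nonneg fun y hy =>
    norm_le_zero_iff.1 (by simpa [hf] using f.norm_apply_le_of_nonneg y hy)
  exact LinearMap.congr_fun hext x

theorem aeval_bernsteinPolynomial_nonneg {h : A₁} (h0 : 0 ≤ h) (h1 : h ≤ 1) (n k : ℕ) :
    0 ≤ Polynomial.aeval h (bernsteinPolynomial ℝ n k) := by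
  have hcomm : Commute h (1 - h) := (Commute.one_right h).sub_right (Commute.refl h)
  have hnn : 0 ≤ h ^ k * (1 - h) ^ (n - k) :=
    Commute.mul_nonneg (CStarAlgebra.pow_nonneg h0 k) (CStarAlgebra.pow_nonneg (sub_nonneg.2 h1) _)
      (hcomm.pow_pow k _)
  simpa [bernsteinPolynomial, mul_assoc, ← nsmul_eq_mul] using nsmul_nonneg hnn (n.choose k)

/-- Bernstein's partition of unity, evaluated at `h` and sent through `φ`, gives a finite
distribution on `[0, 1]` with mean `φ h` and second moment `φ (h ^ 2)` up to `O(1 / n)`. -/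
theorem map_mul_map_le_bernstein (φ : A₁ →ₚ[ℂ] A₂) (hφ : φ 1 = 1) {h : A₁} (h0 : 0 ≤ h)
    (h1 : h ≤ 1) (n : ℕ) :
    φ h * φ h ≤ φ (h * h) + (1 / ((n : ℝ) + 1)) • (φ h - φ (h * h)) := by
  set e : ℕ → A₂ := fun k => φ (Polynomial.aeval h (bernsteinPolynomial ℝ (n + 1) k))
  have he : ∀ k, 0 ≤ e k := fun k => φ.map_nonneg (aeval_bernsteinPolynomial_nonneg h0 h1 _ k)
  have hpush := fun {p q : Polynomial ℝ} (hpq : p = q) =>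
    congrArg (fun p => φ (Polynomial.aeval h p)) hpq
  have hzero : ∑ k ∈ Finset.range (n + 1 + 1), e k = 1 := by
    simpa [e, hφ] using hpush (bernsteinPolynomial.sum ℝ (n + 1))
  have hone : ∑ k ∈ Finset.range (n + 1 + 1), k • e k = (n + 1) • φ h := by
    have := hpush (bernsteinPolynomial.sum_smul ℝ (n + 1))
    simpa only [map_sum, map_nsmul, Polynomial.aeval_X] using this
  have htwo : ∑ k ∈ Finset.range (n + 1 + 1), (k * (k - 1)) • e k =
      ((n + 1) * n) • φ (h * h) := by
    have := hpush (bernsteinPolynomial.sum_mul_smul ℝ (n + 1))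
    simpa only [map_sum, map_nsmul, Polynomial.aeval_X, map_mul, pow_two, add_tsub_cancel_right]
      using this
  have hsq : ∀ k : ℕ, k ^ 2 = k * (k - 1) + k := fun k => by cases k <;> simp; ring
  have hn : (n : ℝ) + 1 ≠ 0 := by positivity
  set r : ℝ := 1 / ((n : ℝ) + 1) with hr
  have hmean : ∑ k ∈ Finset.range (n + 1 + 1), (r * k) • e k = φ h := by
    simp only [mul_smul, ← Finset.smul_sum, Nat.cast_smul_eq_nsmul, hone]
    rw [← Nat.cast_smul_eq_nsmul ℝ, smul_smul]
    simp [hr, hn]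
  have hmoment : ∑ k ∈ Finset.range (n + 1 + 1), (r * k) ^ 2 • e k =
      φ (h * h) + r • (φ h - φ (h * h)) := by
    have : ∀ k : ℕ, (r * k) ^ 2 • e k = r ^ 2 • ((k * (k - 1)) • e k + k • e k) := fun k => by
      rw [mul_pow, mul_smul, ← add_smul, ← hsq, ← Nat.cast_smul_eq_nsmul ℝ, Nat.cast_pow]
    simp only [this, ← Finset.smul_sum, Finset.sum_add_distrib, hone, htwo]
    simp only [← Nat.cast_smul_eq_nsmul ℝ, Nat.cast_mul, Nat.cast_add, Nat.cast_one]
    match_scalars <;> rw [hr] <;> field_simp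
    ring
  simpa only [hmean, hmoment] using sum_smul_mul_self_le _ he hzero fun k => r * k

theorem map_mul_map_le_of_le_one (φ : A₁ →ₚ[ℂ] A₂) (hφ : φ 1 = 1) {h : A₁} (h0 : 0 ≤ h)
    (h1 : h ≤ 1) : φ h * φ h ≤ φ (h * h) := by
  have hlim : Filter.Tendsto
      (fun n : ℕ => φ (h * h) + (1 / ((n : ℝ) + 1)) • (φ h - φ (h * h)))
      Filter.atTop (nhds (φ (h * h) + (0 : ℝ) • (φ h - φ (h * h)))) :=
    tendsto_const_nhds.add (tendsto_one_div_add_atTop_nhds_zero_nat.smul_const _)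
  simpa using ge_of_tendsto' hlim (map_mul_map_le_bernstein φ hφ h0 h1)

/-- Kadison's inequality. -/
theorem map_mul_map_le_map_mul_self (φ : A₁ →ₚ[ℂ] A₂) (hφ : φ 1 = 1) {h : A₁}
    (hh : IsSelfAdjoint h) : φ h * φ h ≤ φ (h * h) := by
  set c : ℝ := ‖h‖ + 1
  have hc : 0 < c := by positivity
  have hup : 0 ≤ c • (1 : A₁) - h := by
    rw [← Algebra.algebraMap_eq_smul_one, sub_nonneg]
    exact hh.le_algebraMap_norm_self.trans (algebraMap_mono A₁ (by simp [c]))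
  have hlow : 0 ≤ h + c • (1 : A₁) := by
    rw [← Algebra.algebraMap_eq_smul_one, ← neg_le_iff_add_nonneg]
    exact (neg_le_neg (algebraMap_mono A₁ (by simp [c]))).trans hh.neg_algebraMap_norm_le_self
  set k : A₁ := (2 * c)⁻¹ • (h + c • (1 : A₁)) with hk
  have hk1 : k ≤ 1 := by
    have : 1 - k = (2 * c)⁻¹ • (c • (1 : A₁) - h) := by rw [hk]; match_scalars <;> field_simp; ring
    exact sub_nonneg.1 (this ▸ smul_nonneg (by positivity) hup)
  have hkad := map_mul_map_le_of_le_one φ hφ (smul_nonneg (by positivity) hlow) hk1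
  have hh_eq : h = (2 * c) • k - c • (1 : A₁) := by rw [hk]; match_scalars <;> field_simp; ring
  have hdiff : φ (h * h) - φ h * φ h = (2 * c) ^ 2 • (φ (k * k) - φ k * φ k) := by
    rw [hh_eq]
    simp only [sub_mul, mul_sub, smul_mul_assoc, mul_smul_comm, one_mul, mul_one, map_sub,
      PositiveLinearMap.map_smul_of_tower, hφ]
    module
  exact sub_nonneg.1 (hdiff ▸ smul_nonneg (by positivity) (sub_nonneg.2 hkad))

end PositiveMaps

section JordanDomain

variable {A₁ A₂ : Type*} [CStarAlgebra A₁] [PartialOrder A₁] [StarOrderedRing A₁]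
  [CStarAlgebra A₂] [PartialOrder A₂] [StarOrderedRing A₂]

theorem eq_zero_of_smul_add_sq_smul_nonneg {u v : A₂} (huv : ∀ t : ℝ, 0 ≤ t • u + t ^ 2 • v) :
    u = 0 := by
  have nonneg_of {w : A₂} (hw : ∀ t : ℝ, 0 ≤ t • w + t ^ 2 • v) : 0 ≤ w := by
    have hstep : ∀ n : ℕ, 0 ≤ w + (1 / ((n : ℝ) + 1)) • v := fun n => by
      have hn : (0 : ℝ) < n + 1 := by positivity
      convert smul_nonneg hn.le (hw (1 / (n + 1))) using 1
      match_scalars <;> field_simp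
    have hlim : Filter.Tendsto (fun n : ℕ => w + (1 / ((n : ℝ) + 1)) • v)
        Filter.atTop (nhds (w + (0 : ℝ) • v)) :=
      tendsto_const_nhds.add (tendsto_one_div_add_atTop_nhds_zero_nat.smul_const _)
    simpa using ge_of_tendsto' hlim hstep
  have hneg : 0 ≤ -u := nonneg_of fun t => by simpa using huv (-t)
  exact le_antisymm (neg_nonneg.1 hneg) (nonneg_of huv)

/-- The defect in Kadison's inequality at `a + t • y` is a quadratic polynomial in `t` without
constant term, so it can only be nonnegative for all `t` if its linear term vanishes. -/
theorem map_jordan_mul_of_isSelfAdjoint (φ : A₁ →ₚ[ℂ] A₂) (hφ : φ 1 = 1) {a y : A₁}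
    (ha : IsSelfAdjoint a) (haa : φ (a * a) = φ a * φ a) (hy : IsSelfAdjoint y) :
    φ (a * y + y * a) = φ a * φ y + φ y * φ a := by
  refine sub_eq_zero.1 (eq_zero_of_smul_add_sq_smul_nonneg (v := φ (y * y) - φ y * φ y) fun t => ?_)
  have hkad := map_mul_map_le_map_mul_self φ hφ (ha.add ((IsSelfAdjoint.all t).smul hy))
  convert sub_nonneg.2 hkad using 1
  simp only [add_mul, mul_add, smul_mul_assoc, mul_smul_comm, map_add,
    PositiveLinearMap.map_smul_of_tower, haa]
  module

theorem map_jordan_mul (φ : A₁ →ₚ[ℂ] A₂) (hφ : φ 1 = 1) {a : A₁} (ha : IsSelfAdjoint a)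
    (haa : φ (a * a) = φ a * φ a) (y : A₁) : φ (a * y + y * a) = φ a * φ y + φ y * φ a := by
  have hext : φ.toLinearMap ∘ₗ (LinearMap.mulLeft ℂ a + LinearMap.mulRight ℂ a) =
      (LinearMap.mulLeft ℂ (φ a) + LinearMap.mulRight ℂ (φ a)) ∘ₗ φ.toLinearMap :=
    LinearMap.ext_on span_selfAdjoint fun _ hy =>
      map_jordan_mul_of_isSelfAdjoint φ hφ ha haa hy
  exact LinearMap.congr_fun hext y

end JordanDomain

section SymmetrizedDerivation

/-- The Leibniz rule with both products of `a` and `d b`, and of `b` and `d a`, symmetrized. This is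
what the Jordan bimodule property of a conditional expectation `E` yields for the failure
`b ↦ E (b * y)` of the bimodule property at some `y` with `E y = 0`. -/
def IsSymmetrizedDerivation {R : Type*} [Ring R] (d : R → R) : Prop :=
  ∀ a b, 2 • d (a * b) = a * d b + d b * a + (b * d a + d a * b)

namespace IsSymmetrizedDerivation

/-- The bracketings `(a * b) * a = a * (b * a)` show that `d a` anticommutes with `a * b - b * a`;
replacing `b` by `b * a` and then by `b * c` gives the identity. -/
theorem commutator_mul_mul_commutator {R : Type*} [Ring R] [IsAddTorsionFree R] {d : R → R}
    (hd : IsSymmetrizedDerivation d) (a b c : R) :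
    (a * b - b * a) * c * (a * d a - d a * a) = 0 := by
  have hsymm (x : R) : d (a * x) = d (x * a) :=
    nsmul_right_injective two_ne_zero (by simp only [hd a x, hd x a]; abel)
  have hanti (x : R) : (a * x - x * a) * d a + d a * (a * x - x * a) = 0 := by
    have h := (hd (a * x) a).symm.trans (mul_assoc a x a ▸ hd a (x * a))
    rw [hsymm x, ← sub_eq_zero] at h
    rw [← h]
    noncomm_ring
  have hright (x : R) : (a * x - x * a) * (a * d a - d a * a) = 0 := by
    calc _ = ((a * (x * a) - x * a * a) * d a + d a * (a * (x * a) - x * a * a)) -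
          ((a * x - x * a) * d a + d a * (a * x - x * a)) * a := by noncomm_ring
      _ = 0 := by rw [hanti, hanti, zero_mul, sub_zero]
  calc _ = (a * (b * c) - b * c * a) * (a * d a - d a * a) -
        b * ((a * c - c * a) * (a * d a - d a * a)) := by noncomm_ring
    _ = 0 := by rw [hright, hright, mul_zero, sub_zero]

variable {R : Type*} [CStarAlgebra R]

theorem commute_apply {d : R → R} (hd : IsSymmetrizedDerivation d) (a : R) : Commute a (d a) := by
  have : IsAddTorsionFree R := .of_isTorsionFree ℂ R
  set x := a * d a - d a * a
  have hx : x * star x * x = 0 := hd.commutator_mul_mul_commutator a (d a) (star x)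
  have hsq : star (star x * x) * (star x * x) = 0 := by
    simpa [mul_assoc] using congrArg (star x * ·) hx
  simp only [CStarRing.star_mul_self_eq_zero_iff] at hsq
  exact sub_eq_zero.1 hsq

theorem apply_pow_succ {d : R → R} (hd : IsSymmetrizedDerivation d) (a : R) (n : ℕ) :
    d (a ^ (n + 1)) = (n + 1) • (a ^ n * d a) := by
  have : IsAddTorsionFree R := .of_isTorsionFree ℂ R
  have hcomm : Commute a (d a) := hd.commute_apply a
  induction n with
  | zero => simp
  | succ n ih =>
    refine nsmul_right_injective two_ne_zero ?_
    have hleft : a * (a ^ n * d a) = a ^ (n + 1) * d a := by rw [← mul_assoc, ← pow_succ']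
    have hright : a ^ n * d a * a = a ^ (n + 1) * d a := by
      rw [mul_assoc, ← hcomm.eq, ← mul_assoc, ← pow_succ]
    have hpow : d a * a ^ (n + 1) = a ^ (n + 1) * d a := (hcomm.pow_left (n + 1)).eq.symm
    simp only [pow_succ' a (n + 1), hd a, ih, mul_smul_comm, smul_mul_assoc, hleft, hright, hpow]
    module

/-- On a unitary `u` the norms `‖d (u ^ (n + 1))‖ = (n + 1) * ‖d u‖` stay bounded. -/
theorem eq_zero {d : R →L[ℂ] R} (hd : IsSymmetrizedDerivation d) : d = 0 := by
  refine ContinuousLinearMap.coe_injective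
    (LinearMap.ext_on (CStarAlgebra.span_unitary R) fun u hu => ?_)
  have hbound (n : ℕ) : n • ‖d u‖ ≤ ‖d‖ * ‖(1 : R)‖ := by
    have hnorm : ‖d (u ^ (n + 1))‖ = (n + 1) * ‖d u‖ := by
      rw [hd.apply_pow_succ, ← Nat.cast_smul_eq_nsmul ℝ, norm_smul,
        CStarRing.norm_mem_unitary_mul _ (pow_mem hu n)]
      simp only [Nat.cast_add, Nat.cast_one, Real.norm_of_nonneg n.cast_add_one_pos.le]
    have hle := d.le_opNorm (u ^ (n + 1))
    rw [hnorm, ← mul_one (u ^ _), CStarRing.norm_mem_unitary_mul _ (pow_mem hu _)] at hle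
    rw [nsmul_eq_mul]
    linarith [norm_nonneg (d u)]
  by_contra hne
  obtain ⟨n, hn⟩ := exists_lt_nsmul (norm_pos_iff.2 hne) (‖d‖ * ‖(1 : R)‖)
  exact hn.not_ge (hbound n)

end IsSymmetrizedDerivation

end SymmetrizedDerivation

section Bimodule

variable {A : Type*} [CStarAlgebra A] [PartialOrder A] [StarOrderedRing A]
  {N : StarSubalgebra ℂ A} {E : A →ₚ[ℂ] A}

theorem map_jordan_mul_of_mem (hE : LinearMap.IsProj (Subalgebra.toSubmodule N.toSubalgebra) E)
    {a : A} (ha : a ∈ N) (y : A) : E (a * y + y * a) = a * E y + E y * a := by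
  have hsa {b : A} (hb : b ∈ N) (hbsa : IsSelfAdjoint b) :
      E (b * y + y * b) = b * E y + E y * b := by
    simpa only [hE.map_id b hb] using map_jordan_mul E (hE.map_id 1 N.one_mem) hbsa
      (by rw [hE.map_id _ (N.mul_mem hb hb), hE.map_id b hb]) y
  have hext : E.toLinearMap ∘ₗ (LinearMap.mulRight ℂ y + LinearMap.mulLeft ℂ y) ∘ₗ N.subtype =
      (LinearMap.mulRight ℂ (E y) + LinearMap.mulLeft ℂ (E y)) ∘ₗ N.subtype :=
    LinearMap.ext_on span_selfAdjoint fun b hb => hsa b.2 (IsSelfAdjoint.map hb N.subtype)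
  exact LinearMap.congr_fun hext ⟨a, ha⟩

theorem isClosed_of_isProj (hE : LinearMap.IsProj (Subalgebra.toSubmodule N.toSubalgebra) E) :
    IsClosed (N : Set A) := by
  have : (N : Set A) = {x | E x = x} :=
    Set.ext fun x => ⟨hE.map_id x, fun hx => hx ▸ hE.map_mem x⟩
  exact this ▸ isClosed_eq (map_continuous E) continuous_id

theorem map_mul_eq_zero_of_mem (hE : LinearMap.IsProj (Subalgebra.toSubmodule N.toSubalgebra) E)
    {y : A} (hy : E y = 0) {b : A} (hb : b ∈ N) : E (b * y) = 0 := by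
  have : IsClosed (N : Set A) := isClosed_of_isProj hE
  let d : N →L[ℂ] N :=
    { toFun := fun c => ⟨E (c * y), hE.map_mem _⟩
      map_add' := fun c c' => Subtype.ext (by simp [add_mul])
      map_smul' := fun t c => Subtype.ext (by simp)
      cont := by fun_prop }
  have hanti (c : N) : E (y * c) = -E (c * y) := by
    have := map_jordan_mul_of_mem hE c.2 y
    rw [hy, mul_zero, zero_mul, add_zero, map_add] at this
    exact eq_neg_of_add_eq_zero_right this
  have hd : IsSymmetrizedDerivation d := fun a c => Subtype.ext <| by
    have h₁ := map_jordan_mul_of_mem hE a.2 (c * y)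
    have h₂ := map_jordan_mul_of_mem hE c.2 (y * a)
    have h₃ : E (y * (a * c)) = -E (a * c * y) := hanti (a * c)
    simp only [map_add, hanti, ← mul_assoc, mul_neg, neg_mul] at h₁ h₂ h₃
    calc 2 • E (a * c * y)
        = (E (a * c * y) + E (c * y * a)) - (E (c * y * a) + E (y * a * c)) := by rw [h₃]; abel
      _ = a * E (c * y) + E (c * y) * a + (c * E (a * y) + E (a * y) * c) := by
        rw [h₁, h₂]; abel
  exact congrArg Subtype.val (DFunLike.congr_fun hd.eq_zero ⟨b, hb⟩)

/-- Tomiyama's theorem. -/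
theorem map_mul_of_mem (hE : LinearMap.IsProj (Subalgebra.toSubmodule N.toSubalgebra) E)
    {b : A} (hb : b ∈ N) (y : A) : E (b * y) = b * E y := by
  have hker : E (y - E y) = 0 := by rw [map_sub, hE.map_id _ (hE.map_mem y), sub_self]
  have := map_mul_eq_zero_of_mem hE hker hb
  rwa [mul_sub, map_sub, hE.map_id _ (N.mul_mem hb (hE.map_mem y)), sub_eq_zero] at this

theorem map_star_mul_mul_of_mem (hE : LinearMap.IsProj (Subalgebra.toSubmodule N.toSubalgebra) E)
    {a : A} (ha : a ∈ N) (y : A) : E (star a * y * a) = star a * E y * a := by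
  have hright (z : A) : E (z * a) = E z * a := by
    rw [← star_star (z * a), map_star, star_mul, map_mul_of_mem hE (star_mem ha), star_mul,
      star_star, map_star, star_star]
  rw [hright, map_mul_of_mem hE (star_mem ha)]

end Bimodule

section KrausOperators

open ContinuousLinearMap

theorem le_iff_forall_inner_le {K : Type*} [NormedAddCommGroup K] [InnerProductSpace ℂ K]
    {S T : B K} : S ≤ T ↔ ∀ ζ, ⟪ζ, S ζ⟫ ≤ ⟪ζ, T ζ⟫ := by
  have hconj (w : ℂ) : (RCLike.re (star w) : ℂ) = star w ∧ 0 ≤ RCLike.re (star w) ↔ 0 ≤ w := by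
    simp [Complex.nonneg_iff, Complex.ext_iff, and_comm, eq_comm]
  rw [le_def, isPositive_iff_complex]
  refine forall_congr' fun ζ => ?_
  rw [← sub_nonneg (b := ⟪ζ, S ζ⟫), ← inner_sub_right, ← sub_apply, ← inner_conj_symm]
  exact hconj _

variable {H} {ι : Type*} {a : ι → B H} {Φ : B H →ₗ[ℂ] B H}

/-- `Φ x = ∑ᵢ aᵢ* x aᵢ`, with convergence in the weak operator topology: the `aᵢ` are Kraus
operators of the normal completely positive map `Φ`. -/
def HasKrausOperators (a : ι → B H) (Φ : B H →ₗ[ℂ] B H) : Prop :=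
  ∀ x η ζ, HasSum (fun i => ⟪a i η, x (a i ζ)⟫) ⟪η, Φ x ζ⟫

namespace HasKrausOperators

theorem map_mem (hΦ : HasKrausOperators a Φ) {N : VonNeumannAlgebra H} (ha : ∀ i, a i ∈ N)
    {x : B H} (hx : x ∈ N) : Φ x ∈ N := by
  rw [← N.commutant_commutant, VonNeumannAlgebra.mem_commutant_iff]
  intro c hc
  have hcomm {c y : B H} (hc : c ∈ N.commutant) (hy : y ∈ N) (ζ : H) : y (c ζ) = c (y ζ) :=
    DFunLike.congr_fun (VonNeumannAlgebra.mem_commutant_iff.1 hc y hy) ζ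
  have hadj (u v : H) : ⟪star c u, v⟫ = ⟪u, c v⟫ := adjoint_inner_left c v u
  ext ζ
  refine ext_inner_left ℂ fun η => ?_
  have hsum : HasSum (fun i => ⟪a i η, x (a i (c ζ))⟫) ⟪η, c (Φ x ζ)⟫ := by
    simpa only [hcomm (star_mem hc) (ha _), hcomm hc (ha _), hcomm hc hx, hadj] using
      hΦ x (star c η) ζ
  exact hsum.unique (hΦ x η (c ζ))

theorem sum_star_mul_mul_le (hΦ : HasKrausOperators a Φ) {x : B H} (hx : 0 ≤ x) (s : Finset ι) :
    ∑ i ∈ s, star (a i) * x * a i ≤ Φ x := by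
  rw [le_iff_forall_inner_le]
  intro ζ
  have hnonneg (i : ι) : 0 ≤ ⟪a i ζ, x (a i ζ)⟫ :=
    ((nonneg_iff_isPositive x).1 hx).inner_nonneg_right _
  simpa [sum_apply, inner_sum, star_eq_adjoint, adjoint_inner_right] using
    sum_le_hasSum s (fun i _ => hnonneg i) (hΦ x ζ ζ)

variable {N : VonNeumannAlgebra H} {E : B H →ₚ[ℂ] B H}

theorem map_apply_le (hΦ : HasKrausOperators a Φ) (ha : ∀ i, a i ∈ N)
    (hE : LinearMap.IsProj (Subalgebra.toSubmodule N.toStarSubalgebra.toSubalgebra) E)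
    {x : B H} (hx : 0 ≤ x) : Φ (E x) ≤ E (Φ x) := by
  rw [le_iff_forall_inner_le]
  refine fun ζ => hasSum_le_of_sum_le (hΦ (E x) ζ ζ) fun s => ?_
  have hs : ∑ i ∈ s, star (a i) * E x * a i ≤ E (Φ x) := by
    simpa only [map_sum, map_star_mul_mul_of_mem hE (ha _)] using
      OrderHomClass.mono E (hΦ.sum_star_mul_mul_le hx s)
  simpa [sum_apply, inner_sum, star_eq_adjoint, adjoint_inner_right] using
    le_iff_forall_inner_le.1 hs ζ

/-- The positive map `E ∘ Φ - Φ ∘ E` annihilates `1`. -/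
theorem commute_isProj (hΦ : HasKrausOperators a Φ) (ha : ∀ i, a i ∈ N)
    (hE : LinearMap.IsProj (Subalgebra.toSubmodule N.toStarSubalgebra.toSubalgebra) E)
    (x : B H) : E (Φ x) = Φ (E x) := by
  let D : B H →ₚ[ℂ] B H := .mk₀ (E.toLinearMap ∘ₗ Φ - Φ ∘ₗ E.toLinearMap) fun _ hx =>
    sub_nonneg.2 (hΦ.map_apply_le ha hE hx)
  have hD : D 1 = 0 := by
    change E (Φ 1) - Φ (E 1) = 0
    rw [hE.map_id 1 (one_mem N), hE.map_id _ (hΦ.map_mem ha (one_mem N)), sub_self]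
  exact sub_eq_zero.1 (map_eq_zero_of_map_one_eq_zero hD x)

end HasKrausOperators

end KrausOperators

section VectorSlices

open ContinuousLinearMap

namespace LCQG

variable {H H2} (Q : LCQG H H2)

theorem norm_tmul (a b : H) : ‖Q.tmul a b‖ = ‖a‖ * ‖b‖ := by
  have h : ‖Q.tmul a b‖ ^ 2 = (‖a‖ * ‖b‖) ^ 2 := by
    have := Q.tmul_inner a b a b
    simp only [inner_self_eq_norm_sq_to_K] at this
    rw [mul_pow]
    exact_mod_cast this
  exact (pow_left_inj₀ (norm_nonneg _) (by positivity) two_ne_zero).1 h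

/-- The tensor map `H × H → H ⊗ H` as a continuous bilinear map, so that `tmulL η` is `ζ ↦ η ⊗ ζ`
and `tmulL.flip ζ` is `η ↦ η ⊗ ζ`. -/
def tmulL : H →L[ℂ] H →L[ℂ] H2 :=
  Q.tmul.mkContinuous₂ 1 fun a b => by rw [Q.norm_tmul, one_mul]

@[simp]
theorem tmulL_apply (a b : H) : Q.tmulL a b = Q.tmul a b := rfl

theorem norm_tmulL_le (a : H) : ‖Q.tmulL a‖ ≤ ‖a‖ :=
  opNorm_le_bound _ (norm_nonneg a) fun b => (Q.norm_tmul a b).le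

theorem ext_tmul {F : Type*} [NormedAddCommGroup F] [NormedSpace ℂ F] {S T : H2 →L[ℂ] F}
    (h : ∀ a b, S (Q.tmul a b) = T (Q.tmul a b)) : S = T :=
  ext_on (Submodule.dense_iff_topologicalClosure_eq_top.2 Q.tmul_total) <| by
    rintro _ ⟨a, b, rfl⟩
    exact h a b

@[simp]
theorem adjoint_tmulL_tmul (e a b : H) : adjoint (Q.tmulL e) (Q.tmul a b) = ⟪e, a⟫ • b :=
  ext_inner_left ℂ fun c => by
    rw [adjoint_inner_right, tmulL_apply, Q.tmul_inner, inner_smul_right]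

theorem adjoint_tmulL_tensorOp (e : H) (x : B H) (v : H2) :
    adjoint (Q.tmulL e) (Q.tensorOp 1 x v) = x (adjoint (Q.tmulL e) v) := by
  have : adjoint (Q.tmulL e) ∘L Q.tensorOp 1 x = x ∘L adjoint (Q.tmulL e) :=
    Q.ext_tmul fun a b => by simp [Q.tensorOp_apply]
  exact DFunLike.congr_fun this v

theorem orthonormal_tmul {ι : Type*} {v : ι → H} (hv : Orthonormal ℂ v) :
    Orthonormal ℂ fun p : ι × ι => Q.tmul (v p.1) (v p.2) := by
  classical
  rw [orthonormal_iff_ite] at hv ⊢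
  rintro ⟨i, j⟩ ⟨k, l⟩
  simp [Q.tmul_inner, hv, ← ite_and, and_comm]

theorem topologicalClosure_span_tmul {ι : Type*} (b : HilbertBasis ι ℂ H) :
    (Submodule.span ℂ (Set.range fun p : ι × ι => Q.tmul (b p.1) (b p.2))).topologicalClosure =
      ⊤ := by
  set S := (Submodule.span ℂ
    (Set.range fun p : ι × ι => Q.tmul (b p.1) (b p.2))).topologicalClosure
  have hclosed : IsClosed (S : Set H2) := Submodule.isClosed_topologicalClosure _
  have of_basis {T : H →L[ℂ] H2} (hT : ∀ i, T (b i) ∈ S) (a : H) : T a ∈ S := by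
    have hle : Submodule.span ℂ (Set.range b) ≤ S.comap T.toLinearMap :=
      Submodule.span_le.2 (Set.range_subset_iff.2 hT)
    have := Submodule.topologicalClosure_minimal _ hle (hclosed.preimage T.continuous)
    exact this (b.dense_span ▸ Submodule.mem_top)
  have htmul (c d : H) : Q.tmul c d ∈ S :=
    of_basis (T := Q.tmulL.flip d) (fun i => of_basis (T := Q.tmulL (b i)) (fun j =>
      Submodule.le_topologicalClosure _ (Submodule.subset_span ⟨(i, j), rfl⟩)) d) c
  rw [eq_top_iff, ← Q.tmul_total]
  refine Submodule.topologicalClosure_minimal _ (Submodule.span_le.2 ?_) hclosed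
  rintro _ ⟨c, d, rfl⟩
  exact htmul c d

/-- The Hilbert basis `b i ⊗ b j` of `H ⊗ H`. -/
def tensorBasis {ι : Type*} (b : HilbertBasis ι ℂ H) : HilbertBasis (ι × ι) ℂ H2 :=
  .mk (Q.orthonormal_tmul b.orthonormal) (Q.topologicalClosure_span_tmul b).ge

@[simp]
theorem tensorBasis_apply {ι : Type*} (b : HilbertBasis ι ℂ H) (p : ι × ι) :
    Q.tensorBasis b p = Q.tmul (b p.1) (b p.2) := by
  rw [tensorBasis, HilbertBasis.coe_mk]

theorem hasSum_inner_adjoint_tmulL {ι : Type*} (b : HilbertBasis ι ℂ H) (v w : H2) :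
    HasSum (fun i => ⟪adjoint (Q.tmulL (b i)) v, adjoint (Q.tmulL (b i)) w⟫) ⟪v, w⟫ := by
  refine ((Q.tensorBasis b).hasSum_inner_mul_inner v w).prod_fiberwise fun i => ?_
  simpa only [adjoint_inner_left, adjoint_inner_right, tensorBasis_apply, tmulL_apply] using
    b.hasSum_inner_mul_inner (adjoint (Q.tmulL (b i)) v) (adjoint (Q.tmulL (b i)) w)

/-- The slice map `ω ⊗ id : B(H ⊗ H) → B(H)` of the vector functional `ω x = ⟪η, x ξ⟫`. -/
def vecSlice (η ξ : H) : B H2 →L[ℂ] B H :=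
  compL ℂ H H2 H (adjoint (Q.tmulL η)) ∘L (compL ℂ H H2 H2).flip (Q.tmulL ξ)

theorem vecSlice_apply (η ξ : H) (X : B H2) (ζ : H) :
    Q.vecSlice η ξ X ζ = adjoint (Q.tmulL η) (X (Q.tmul ξ ζ)) := rfl

theorem inner_vecSlice (η ξ θ ζ : H) (X : B H2) :
    ⟪θ, Q.vecSlice η ξ X ζ⟫ = ⟪Q.tmul η θ, X (Q.tmul ξ ζ)⟫ := by
  rw [vecSlice_apply, adjoint_inner_right, tmulL_apply]

theorem norm_vecSlice_le (η ξ : H) : ‖Q.vecSlice η ξ‖ ≤ ‖η‖ * ‖ξ‖ := by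
  refine opNorm_le_bound _ (by positivity) fun X => ?_
  calc ‖adjoint (Q.tmulL η) ∘L (X ∘L Q.tmulL ξ)‖
      ≤ ‖adjoint (Q.tmulL η)‖ * (‖X‖ * ‖Q.tmulL ξ‖) :=
        (opNorm_comp_le _ _).trans (by gcongr; exact opNorm_comp_le _ _)
    _ ≤ ‖η‖ * (‖X‖ * ‖ξ‖) := by
        rw [LinearIsometryEquiv.norm_map]
        gcongr <;> exact Q.norm_tmulL_le _
    _ = ‖η‖ * ‖ξ‖ * ‖X‖ := by ring

theorem four_smul_vecSlice (η ξ : H) (X : B H2) :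
    (4 : ℂ) • Q.vecSlice η ξ X =
      Q.vecSlice (η + ξ) (η + ξ) X - Q.vecSlice (η - ξ) (η - ξ) X
        - Complex.I • Q.vecSlice (η + Complex.I • ξ) (η + Complex.I • ξ) X
        + Complex.I • Q.vecSlice (η - Complex.I • ξ) (η - Complex.I • ξ) X := by
  ext ζ
  refine ext_inner_left ℂ fun θ => ?_
  simp only [add_apply, sub_apply, smul_apply, inner_add_right, inner_sub_right, inner_smul_right,
    inner_vecSlice, map_add, map_sub, map_smul, LinearMap.add_apply, LinearMap.sub_apply,
    LinearMap.smul_apply, inner_add_left, inner_sub_left, inner_smul_left, Complex.conj_I]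
  linear_combination (2 * ⟪Q.tmul η θ, X (Q.tmul ξ ζ)⟫ - 2 * ⟪Q.tmul ξ θ, X (Q.tmul η ζ)⟫) *
    Complex.I_sq

theorem vecSlice_W_mem (η ξ : H) : Q.vecSlice η ξ Q.W ∈ Q.Mhat := by
  rw [← Q.Mhat.commutant_commutant, VonNeumannAlgebra.mem_commutant_iff]
  intro c hc
  ext ζ
  have hW : Q.W (Q.tensorOp 1 c (Q.tmul ξ ζ)) = Q.tensorOp 1 c (Q.W (Q.tmul ξ ζ)) :=
    DFunLike.congr_fun (Q.W_mem 1 (one_mem _) c hc).eq (Q.tmul ξ ζ)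
  rw [Q.tensorOp_apply, one_apply_eq_self] at hW
  rw [mul_apply_eq_comp, mul_apply_eq_comp, vecSlice_apply, vecSlice_apply, hW,
    adjoint_tmulL_tensorOp]

/-- `Delta` as a linear map. -/
def deltaHom : B H →ₗ[ℂ] B H2 :=
  LinearMap.mulRight ℂ Q.W ∘ₗ LinearMap.mulLeft ℂ (star Q.W) ∘ₗ Q.tensorOp 1

theorem hasKrausOperators_vecSlice_delta {ι : Type*} (b : HilbertBasis ι ℂ H) (ξ : H) :
    HasKrausOperators (fun i => Q.vecSlice (b i) ξ Q.W)
      ((Q.vecSlice ξ ξ).toLinearMap ∘ₗ Q.deltaHom) := by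
  intro x θ ζ
  have hinner : ⟪θ, Q.vecSlice ξ ξ (Q.Delta x) ζ⟫ =
      ⟪Q.W (Q.tmul ξ θ), Q.tensorOp 1 x (Q.W (Q.tmul ξ ζ))⟫ := by
    rw [inner_vecSlice, ← adjoint_inner_right, ← star_eq_adjoint]
    rfl
  have := Q.hasSum_inner_adjoint_tmulL b (Q.W (Q.tmul ξ θ)) (Q.tensorOp 1 x (Q.W (Q.tmul ξ ζ)))
  simp only [adjoint_tmulL_tensorOp, ← hinner] at this
  exact this

section ConditionalExpectation

variable {Q} {E : B H →ₚ[ℂ] B H}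

theorem map_vecSlice_delta_self
    (hE : LinearMap.IsProj (Subalgebra.toSubmodule Q.Mhat.toStarSubalgebra.toSubalgebra) E)
    (ξ : H) (x : B H) :
    E (Q.vecSlice ξ ξ (Q.Delta x)) = Q.vecSlice ξ ξ (Q.Delta (E x)) := by
  obtain ⟨w, b, -⟩ := exists_hilbertBasis ℂ H
  exact (Q.hasKrausOperators_vecSlice_delta b ξ).commute_isProj (fun i => Q.vecSlice_W_mem _ ξ) hE x

theorem map_vecSlice_delta
    (hE : LinearMap.IsProj (Subalgebra.toSubmodule Q.Mhat.toStarSubalgebra.toSubalgebra) E)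
    (η ξ : H) (x : B H) :
    E (Q.vecSlice η ξ (Q.Delta x)) = Q.vecSlice η ξ (Q.Delta (E x)) := by
  refine smul_right_injective _ (four_ne_zero (α := ℂ)) ?_
  simp only [← map_smul E, four_smul_vecSlice]
  simp only [map_add, map_sub, map_smul, map_vecSlice_delta_self hE]

end ConditionalExpectation

end LCQG

end VectorSlices

section NormalFunctionals

open ContinuousLinearMap InnerProductSpace Filter Topology

variable {K : Type*} [NormedAddCommGroup K] [InnerProductSpace ℂ K]

theorem summable_norm_mul_norm {E F : Type*} [NormedAddCommGroup E] [NormedAddCommGroup F]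
    {η : ℕ → E} {ξ : ℕ → F} (hη : Summable fun n => ‖η n‖ ^ 2)
    (hξ : Summable fun n => ‖ξ n‖ ^ 2) : Summable fun n => ‖η n‖ * ‖ξ n‖ :=
  .of_nonneg_of_le (fun _ => by positivity)
    (fun n => by nlinarith [sq_nonneg (‖η n‖ - ‖ξ n‖)]) (hη.add hξ)

theorem norm_inner_apply_le (η ξ : K) (x : B K) : ‖⟪η, x ξ⟫‖ ≤ ‖η‖ * ‖ξ‖ * ‖x‖ :=
  calc ‖⟪η, x ξ⟫‖ ≤ ‖η‖ * (‖x‖ * ‖ξ‖) :=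
        (norm_inner_le_norm _ _).trans (by gcongr; exact x.le_opNorm ξ)
    _ = ‖η‖ * ‖ξ‖ * ‖x‖ := by ring

theorem IsNormalFunctional.tendsto_of_bounded {φ : B K →ₗ[ℂ] ℂ} (hφ : IsNormalFunctional K φ)
    {α : Type*} {l : Filter α} {T : α → B K} {X : B K} {C : ℝ} (hC : ∀ i, ‖T i‖ ≤ C)
    (hT : ∀ u v, Tendsto (fun i => ⟪u, T i v⟫) l (𝓝 ⟪u, X v⟫)) :
    Tendsto (fun i => φ (T i)) l (𝓝 (φ X)) := by
  obtain ⟨ξ, η, hξ, hη, hsum⟩ := hφ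
  simp only [← (hsum _).tsum_eq]
  refine tendsto_tsum_of_dominated_convergence ((summable_norm_mul_norm hη hξ).mul_right C)
    (fun n => hT _ _) (.of_forall fun i n => (norm_inner_apply_le _ _ _).trans ?_)
  gcongr
  exact hC i

theorem isNormalFunctional_vecFunctional (ξ η : K) :
    IsNormalFunctional K (vecFunctional K ξ η) := by
  have hsq (v : K) : Summable fun n => ‖(Pi.single 0 v : ℕ → K) n‖ ^ 2 :=
    summable_of_ne_finset_zero (s := {0}) fun n hn => by simp_all
  refine ⟨Pi.single 0 ξ, Pi.single 0 η, hsq ξ, hsq η, fun x => ?_⟩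
  have := hasSum_single (f := fun n => ⟪(Pi.single 0 η : ℕ → K) n, x ((Pi.single 0 ξ : ℕ → K) n)⟫) 0
    fun n hn => by simp [hn]
  simpa [vecFunctional] using this

variable {ι : Type*} (b : HilbertBasis ι ℂ K)

theorem starProjection_span_eq_sum_rankOne [DecidableEq K] (s : Finset ι) :
    (Submodule.span ℂ (s.image b : Set K)).starProjection = ∑ i ∈ s, rankOne ℂ (b i) (b i) := by
  rw [(OrthonormalBasis.span b.orthonormal s).starProjection_eq_sum_rankOne]
  simp only [OrthonormalBasis.span_apply]
  exact s.sum_coe_sort fun i => rankOne ℂ (b i) (b i)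

theorem tendsto_starProjection_span [DecidableEq K] (v : K) :
    Tendsto (fun s : Finset ι => (Submodule.span ℂ (s.image b : Set K)).starProjection v) atTop
      (𝓝 v) :=
  Submodule.starProjection_tendsto_self _
    (fun _ _ hst => Submodule.span_mono (Finset.coe_subset.2 (Finset.image_subset_image hst))) v
    b.finite_spans_dense.ge

variable {b} in
/-- The functionals are compared at `P X P`, where `P` runs through the projections onto the spans
of finitely many basis vectors. -/
theorem IsNormalFunctional.ext_rankOne {φ ψ : B K →ₗ[ℂ] ℂ} (hφ : IsNormalFunctional K φ)
    (hψ : IsNormalFunctional K ψ)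
    (h : ∀ i j, φ (rankOne ℂ (b i) (b j)) = ψ (rankOne ℂ (b i) (b j))) : φ = ψ := by
  classical
  ext X
  let P (s : Finset ι) : B K := (Submodule.span ℂ (s.image b : Set K)).starProjection
  have hP (s : Finset ι) : ‖P s‖ ≤ 1 := Submodule.starProjection_norm_le _
  have hnorm (s : Finset ι) : ‖P s * X * P s‖ ≤ 1 * ‖X‖ * 1 :=
    norm_mul_le_of_le (norm_mul_le_of_le (hP s) le_rfl) (hP s)
  have hlim (u v : K) : Tendsto (fun s => ⟪u, (P s * X * P s) v⟫) atTop (𝓝 ⟪u, X v⟫) := by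
    simp only [mul_apply_eq_comp, P, ← Submodule.inner_starProjection_left_eq_right]
    exact (tendsto_starProjection_span b u).inner
      ((X.continuous.tendsto v).comp (tendsto_starProjection_span b v))
  have hagree (s : Finset ι) : φ (P s * X * P s) = ψ (P s * X * P s) := by
    have : P s * X * P s = ∑ j ∈ s, ∑ i ∈ s, ⟪b i, X (b j)⟫ • rankOne ℂ (b i) (b j) := by
      simp only [P, starProjection_span_eq_sum_rankOne, Finset.sum_mul, Finset.mul_sum, mul_def,
        comp_rankOne]
      simp
    simp only [this, map_sum, map_smul, h]
  exact tendsto_nhds_unique (hφ.tendsto_of_bounded hnorm hlim)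
    ((hψ.tendsto_of_bounded hnorm hlim).congr fun s => (hagree s).symm)

end NormalFunctionals

section Slices

open ContinuousLinearMap InnerProductSpace

namespace LCQG

variable {H H2} (Q : LCQG H H2)

theorem rankOne_tmul (a b c d : H) :
    rankOne ℂ (Q.tmul a b) (Q.tmul c d) = Q.tensorOp (rankOne ℂ a c) (rankOne ℂ b d) :=
  Q.ext_tmul fun u v => by simp [Q.tensorOp_apply, Q.tmul_inner, smul_smul, mul_comm]

theorem ext_tensorOp {φ ψ : B H2 →ₗ[ℂ] ℂ} (hφ : IsNormalFunctional H2 φ)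
    (hψ : IsNormalFunctional H2 ψ)
    (h : ∀ x y, φ (Q.tensorOp x y) = ψ (Q.tensorOp x y)) : φ = ψ := by
  obtain ⟨w, b, -⟩ := exists_hilbertBasis ℂ H
  refine hφ.ext_rankOne (b := Q.tensorBasis b) hψ fun i j => ?_
  simp only [tensorBasis_apply, rankOne_tmul, h]

/-- Matrix coefficients of both sides are normal in `X`, so they are compared at elementary
tensors. -/
theorem hasSum_vecSlice {ω : B H →ₗ[ℂ] ℂ} {ξ η : ℕ → H}
    (hξ : Summable fun n => ‖ξ n‖ ^ 2) (hη : Summable fun n => ‖η n‖ ^ 2)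
    (hω : ∀ x, HasSum (fun n => ⟪η n, x (ξ n)⟫) (ω x)) (X : B H2) :
    HasSum (fun n => Q.vecSlice (η n) (ξ n) X) (Q.sliceL ω X) := by
  obtain ⟨S, hS⟩ : Summable fun n => Q.vecSlice (η n) (ξ n) :=
    .of_norm_bounded (summable_norm_mul_norm hη hξ) fun n => Q.norm_vecSlice_le _ _
  have hcoeff (X : B H2) (θ ζ : H) :
      HasSum (fun n => ⟪Q.tmul (η n) θ, X (Q.tmul (ξ n) ζ)⟫) ⟪θ, S X ζ⟫ := by
    simp only [← inner_vecSlice]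
    exact hS.mapL (innerSL ℂ θ ∘L .apply ℂ H ζ ∘L .apply ℂ (B H) X)
  have hS_slice : S X = Q.sliceL ω X := by
    ext ζ
    refine ext_inner_left ℂ fun θ => ?_
    have hω' : IsNormalFunctional H ω := ⟨ξ, η, hξ, hη, hω⟩
    have hnormal : IsNormalFunctional H2 (vecFunctional H ζ θ ∘ₗ S.toLinearMap) := by
      refine ⟨fun n => Q.tmul (ξ n) ζ, fun n => Q.tmul (η n) θ, ?_, ?_, fun X => hcoeff X θ ζ⟩
      · simpa only [norm_tmul, mul_pow] using hξ.mul_right (‖ζ‖ ^ 2)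
      · simpa only [norm_tmul, mul_pow] using hη.mul_right (‖θ‖ ^ 2)
    have hext : vecFunctional H ζ θ ∘ₗ S.toLinearMap = Q.funcTensor ω (vecFunctional H ζ θ) := by
      refine Q.ext_tensorOp hnormal
        (Q.funcTensor_normal _ _ hω' (isNormalFunctional_vecFunctional ζ θ)) fun x y => ?_
      rw [Q.funcTensor_elem]
      refine (hcoeff _ θ ζ).unique ?_
      simp only [Q.tensorOp_apply, Q.tmul_inner]
      exact (hω x).mul_right ⟪θ, y ζ⟫
    exact (DFunLike.congr_fun hext X).trans (Q.sliceL_char ω X ζ θ).symm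
  rw [← hS_slice]
  exact hS.mapL (.apply ℂ (B H) X)

theorem sliceL_tensorOp (ω : B H →ₗ[ℂ] ℂ) (x y : B H) :
    Q.sliceL ω (Q.tensorOp x y) = ω x • y := by
  ext ζ
  refine ext_inner_left ℂ fun θ => ?_
  rw [smul_apply, inner_smul_right]
  exact (Q.sliceL_char ω _ ζ θ).trans (Q.funcTensor_elem _ _ _ _)

end LCQG

end Slices

namespace IsConditionalExpectation

variable {H} {N : VonNeumannAlgebra H} {E : B H →ₗ[ℂ] B H}

/-- A conditional expectation as a bundled positive linear map. -/
def toPositiveLinearMap (hE : IsConditionalExpectation H N E) : B H →ₚ[ℂ] B H :=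
  .mk₀ E fun x hx => (ContinuousLinearMap.nonneg_iff_isPositive _).2 <|
    hE.positive x ((ContinuousLinearMap.nonneg_iff_isPositive x).1 hx)

theorem isProj (hE : IsConditionalExpectation H N E) :
    LinearMap.IsProj (Subalgebra.toSubmodule N.toStarSubalgebra.toSubalgebra)
      hE.toPositiveLinearMap :=
  ⟨hE.mem_range, hE.fixes⟩

end IsConditionalExpectation

variable {H} in
theorem mem_commutant_of_mem_center {N : VonNeumannAlgebra H} {z : B H} (hz : z ∈ center H N) :
    z ∈ N.commutant :=
  VonNeumannAlgebra.mem_commutant_iff.2 fun y hy => (hz.2 y hy).symm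

namespace LCQG

variable {H H2} {Q : LCQG H H2}

theorem map_sliceL_delta {E : B H →ₗ[ℂ] B H} (hE : IsConditionalExpectation H Q.Mhat E)
    {ω : B H →ₗ[ℂ] ℂ} (hω : IsNormalFunctional H ω) (x : B H) :
    E (Q.sliceL ω (Q.Delta x)) = Q.sliceL ω (Q.Delta (E x)) := by
  obtain ⟨ξ, η, hξ, hη, hsum⟩ := hω
  have hmap := (Q.hasSum_vecSlice hξ hη hsum (Q.Delta x)).map hE.toPositiveLinearMap
    (map_continuous hE.toPositiveLinearMap)
  simp only [Function.comp_def, map_vecSlice_delta hE.isProj] at hmap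
  exact hmap.unique (Q.hasSum_vecSlice hξ hη hsum (Q.Delta (E x)))

theorem delta_eq_of_mem_commutant {c : B H} (hc : c ∈ Q.Mhat.commutant) :
    Q.Delta c = Q.tensorOp 1 c :=
  calc star Q.W * Q.tensorOp 1 c * Q.W = star Q.W * Q.W * Q.tensorOp 1 c := by
        rw [mul_assoc, mul_assoc, (Q.W_mem 1 (one_mem _) c hc).eq]
    _ = Q.tensorOp 1 c := by rw [Q.W_unitary_l, one_mul]

theorem map_sliceL_delta_of_mem_center {E : B H →ₗ[ℂ] B H}
    (hE : IsConditionalExpectation H Q.Mhat E) {ω : B H →ₗ[ℂ] ℂ} (hω : IsNormalFunctional H ω)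
    {x : B H} (hx : E x ∈ center H Q.Mhat) : E (Q.sliceL ω (Q.Delta x)) = ω 1 • E x := by
  rw [map_sliceL_delta hE hω, delta_eq_of_mem_commutant (mem_commutant_of_mem_center hx),
    sliceL_tensorOp]

end LCQG

/-- If `E` is a conditional expectation of `B(L²(𝔾))` onto `L∞(𝔾̂)` mapping `L∞(𝔾)` into
the center of `L∞(𝔾̂)`, then for any state `ρ` of `L∞(𝔾̂)`, the functional
`m := ρ ∘ E|_{L∞(𝔾)}` is a left-invariant mean on `L∞(𝔾)`; in particular `𝔾` is amenable. -/
theorem conditional_expectation_gives_mean (Q : LCQG H H2)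
    (E : B H →ₗ[ℂ] B H) (hE : IsConditionalExpectation H Q.Mhat E)
    (hEcen : ∀ x ∈ Q.M, E x ∈ center H Q.Mhat)
    (ρ : B H →ₗ[ℂ] ℂ) (hρ : IsStateOn H Q.Mhat ρ) :
    Q.IsLeftInvariantMean (ρ ∘ₗ E) ∧ Q.Amenable := by
  have hstate : IsStateOn H Q.M (ρ ∘ₗ E) :=
    ⟨by rw [LinearMap.comp_apply, hE.unital, hρ.1],
      fun x _ hx => hρ.2 _ (hE.mem_range x) (hE.positive x hx)⟩
  have hmean : Q.IsLeftInvariantMean (ρ ∘ₗ E) := by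
    refine ⟨hstate, fun x hx ω hω => ?_⟩
    rw [LinearMap.comp_apply, LinearMap.comp_apply,
      LCQG.map_sliceL_delta_of_mem_center hE hω (hEcen x hx), map_smul, smul_eq_mul]
  exact ⟨hmean, _, hmean⟩

end LCQGNote
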